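/- Let n ≥ 2, q > 1, and let a_1 ≥ a_2 ≥ … ≥ a_n ≥ 0 be real numbers, not all zero. Then the Lorentz space ℓ_{w,q}^n is isometric to a subspace of L_q if and only if a_1 = a_2 = … = a_n (so that ℓ_{w,q}^n = ℓ_q^n up to a constant multiple of the norm). -/

import Mathlib

/-!
The unit ball of a subspace of `L_q`, `q > 1`, is smooth: for `f, g` in `L_q` the second
difference `∫ |f + h g| ^ q + |f - h g| ^ q - 2 |f| ^ q` is `o(h)` as `h → 0+`
(`tendsto_secondDiff_integral`, by dominated convergence; convexity of `|·| ^ q` shows that the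
difference quotients for `0 < h ≤ 1` are nonnegative and at most the one for `h = 1`).

If the weights are not all equal, then `a 1 > a n`, and the Lorentz norm has a corner at the
all-ones vector in the direction `e_1 - e_n`: by the rearrangement inequality
(`sum_le_lorentz`) and Bernoulli's inequality, both `‖1 + h (e_1 - e_n)‖ ^ q` and
`‖1 - h (e_1 - e_n)‖ ^ q` are at least `‖1‖ ^ q + q h (a 1 - a n)`, so that the second
difference is at least `2 q h (a 1 - a n)`.

Conversely, for constant weights the space is `L_q` of a multiple of the counting measure.
-/

open MeasureTheory

/-- The non-increasing rearrangement of `(|x 0|, …, |x (n-1)|)`. -/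
noncomputable def dstar {n : ℕ} (x : Fin n → ℝ) : Fin n → ℝ :=
  fun i => |x (Tuple.sort (fun j => -|x j|) i)|

/-- The second difference quotient of `|·| ^ q` at `u` with increment `h * v`. -/
noncomputable def secondDiff (q u v h : ℝ) : ℝ :=
  h⁻¹ * (|u + h * v| ^ q + |u - h * v| ^ q - 2 * |u| ^ q)

lemma abs_rpow_convex {q : ℝ} (hq : 1 < q) {h : ℝ} (h0 : 0 ≤ h) (h1 : h ≤ 1) (u w : ℝ) :
    |(1 - h) * u + h * w| ^ q ≤ (1 - h) * |u| ^ q + h * |w| ^ q := by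
  have h2 : |(1 - h) * u + h * w| ≤ (1 - h) * |u| + h * |w| := by
    refine (abs_add_le _ _).trans_eq ?_
    rw [abs_mul, abs_mul, abs_of_nonneg h0, abs_of_nonneg (sub_nonneg.2 h1)]
  refine (Real.rpow_le_rpow (abs_nonneg _) h2 (by linarith)).trans ?_
  have := (convexOn_rpow hq.le).2 (Set.mem_Ici.2 (abs_nonneg u)) (Set.mem_Ici.2 (abs_nonneg w))
    (sub_nonneg.2 h1) h0 (by ring)
  simpa only [smul_eq_mul] using this

lemma secondDiff_nonneg {q : ℝ} (hq : 1 < q) {h : ℝ} (h0 : 0 < h) (u v : ℝ) :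
    0 ≤ secondDiff q u v h := by
  have := abs_rpow_convex hq (h := 1 / 2) (by norm_num) (by norm_num) (u + h * v) (u - h * v)
  have e : (1 - 1 / 2) * (u + h * v) + 1 / 2 * (u - h * v) = u := by ring
  rw [e] at this
  exact mul_nonneg (inv_nonneg.2 h0.le) (by linarith)

lemma secondDiff_le {q : ℝ} (hq : 1 < q) {h : ℝ} (h0 : 0 < h) (h1 : h ≤ 1) (u v : ℝ) :
    secondDiff q u v h ≤ |u + v| ^ q + |u - v| ^ q - 2 * |u| ^ q := by
  have k1 := abs_rpow_convex hq h0.le h1 u (u + v)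
  have k2 := abs_rpow_convex hq h0.le h1 u (u - v)
  rw [show (1 - h) * u + h * (u + v) = u + h * v by ring] at k1
  rw [show (1 - h) * u + h * (u - v) = u - h * v by ring] at k2
  rw [secondDiff, inv_mul_le_iff₀ h0]
  linarith

lemma tendsto_secondDiff {q : ℝ} (hq : 1 < q) (u v : ℝ) :
    Filter.Tendsto (secondDiff q u v) (nhdsWithin 0 (Set.Ioi 0)) (nhds 0) := by
  have d1 : HasDerivAt (fun h : ℝ => u + h * v) v 0 := by
    simpa using ((hasDerivAt_id (0 : ℝ)).mul_const v).const_add u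
  have d2 : HasDerivAt (fun h : ℝ => u - h * v) (-v) 0 := by
    simpa using ((hasDerivAt_id (0 : ℝ)).mul_const v).const_sub u
  have e1 := (hasDerivAt_abs_rpow (u + 0 * v) hq).comp (0 : ℝ) d1
  have e2 := (hasDerivAt_abs_rpow (u - 0 * v) hq).comp (0 : ℝ) d2
  have e3 := (e1.add e2).tendsto_slope_zero_right
  simp only [Function.comp_def, Pi.add_apply, zero_mul, add_zero, sub_zero, zero_add,
    smul_eq_mul, mul_neg, add_neg_cancel] at e3
  refine e3.congr fun h => ?_
  rw [secondDiff]
  ring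

/-- Smoothness of the norm of `L_q`. Only the integrability of the powers `|f + h g| ^ q` is
used, so `f` and `g` themselves need not be measurable. -/
lemma tendsto_secondDiff_integral {Ω : Type*} [MeasurableSpace Ω] {μ : Measure Ω} {q : ℝ}
    (hq : 1 < q) (f g : Ω → ℝ) (hint : ∀ h : ℝ, Integrable (fun ω => |f ω + h * g ω| ^ q) μ) :
    Filter.Tendsto (fun h => ∫ ω, secondDiff q (f ω) (g ω) h ∂μ)
      (nhdsWithin 0 (Set.Ioi 0)) (nhds 0) := by
  have hint' : ∀ h : ℝ, Integrable
      (fun ω => |f ω + h * g ω| ^ q + |f ω - h * g ω| ^ q - 2 * |f ω| ^ q) μ := by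
    intro h
    have i1 := hint (-h)
    have i0 := hint 0
    simp only [neg_mul, ← sub_eq_add_neg] at i1
    simp only [zero_mul, add_zero] at i0
    exact ((hint h).add i1).sub (i0.const_mul 2)
  have key := tendsto_integral_filter_of_dominated_convergence (μ := μ)
    (l := nhdsWithin (0 : ℝ) (Set.Ioi 0))
    (F := fun h ω => secondDiff q (f ω) (g ω) h) (f := fun _ => (0 : ℝ))
    (fun ω => |f ω + 1 * g ω| ^ q + |f ω - 1 * g ω| ^ q - 2 * |f ω| ^ q)
    (Filter.Eventually.of_forall fun h => ((hint' h).const_mul h⁻¹).aestronglyMeasurable)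
    ?_ (hint' 1) (Filter.Eventually.of_forall fun ω => tendsto_secondDiff hq _ _)
  · simpa using key
  · filter_upwards [Ioc_mem_nhdsGT (zero_lt_one' ℝ)] with h hh
    refine Filter.Eventually.of_forall fun ω => ?_
    rw [Real.norm_of_nonneg (secondDiff_nonneg hq hh.1 _ _), one_mul]
    exact secondDiff_le hq hh.1 hh.2 _ _

lemma dstar_antitone {n : ℕ} (x : Fin n → ℝ) : Antitone (dstar x) := by
  intro i j hij
  have := Tuple.monotone_sort (fun j => -|x j|) hij
  simp only [Function.comp_apply] at this
  simp only [dstar]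
  linarith

/-- The rearrangement inequality: for non-increasing weights, the decreasing order of the
coordinates maximises the weighted sum. -/
lemma sum_le_lorentz {n : ℕ} {q : ℝ} (hq : 1 < q) {b : Fin n → ℝ} (hb : Antitone b)
    (x : Fin n → ℝ) (τ : Equiv.Perm (Fin n)) :
    ∑ i, b i * |x (τ i)| ^ q ≤ ∑ i, b i * dstar x i ^ q := by
  have hd : Antitone fun i => dstar x i ^ q := fun i j hij =>
    Real.rpow_le_rpow (abs_nonneg _) (dstar_antitone x hij) (by linarith)
  have := (hb.monovary hd).sum_mul_comp_perm_le_sum_mul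
    (σ := τ.trans (Tuple.sort (fun j => -|x j|)).symm)
  simpa [dstar] using this

lemma dstar_one (n : ℕ) (i : Fin n) : dstar (fun _ : Fin n => (1 : ℝ)) i = 1 := by
  simp [dstar]

/-- The corner at the all-ones vector: the first-order term of the lower bound does not change
when the coordinates of the perturbation `d` are permuted. -/
lemma lorentz_lower {n : ℕ} {q : ℝ} (hq : 1 < q) {b : Fin n → ℝ} (hb : Antitone b)
    (hb0 : ∀ i, 0 ≤ b i) (x d : Fin n → ℝ) (τ : Equiv.Perm (Fin n)) (hd : ∀ i, -1 ≤ d i)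
    (hx : ∀ i, x (τ i) = 1 + d i) :
    ∑ i, b i + q * ∑ i, b i * d i ≤ ∑ i, b i * dstar x i ^ q := by
  refine le_trans ?_ (sum_le_lorentz hq hb x τ)
  rw [Finset.mul_sum, ← Finset.sum_add_distrib]
  refine Finset.sum_le_sum fun i _ => ?_
  rw [hx, abs_of_nonneg (by linarith [hd i])]
  have := mul_le_mul_of_nonneg_left (one_add_mul_self_le_rpow_one_add (hd i) hq.le) (hb0 i)
  linarith

/-- For `n ≥ 2`, `q > 1` and weights `a 1 ≥ a 2 ≥ … ≥ a n ≥ 0` not all zero,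
the Lorentz space `ℓ_{w,q}^n` is isometric to a subspace of `L_q` iff all the
weights are equal. -/
theorem stmt1 (n : ℕ) (hn : 2 ≤ n) (q : ℝ) (hq : 1 < q)
    (a : ℕ → ℝ)
    (hmono : ∀ i, 1 ≤ i → i + 1 ≤ n → a (i + 1) ≤ a i)
    (hnonneg : ∀ i, 1 ≤ i → i ≤ n → 0 ≤ a i)
    (hnz : ∃ i, 1 ≤ i ∧ i ≤ n ∧ a i ≠ 0) :
    (∃ (Ω : Type) (_ : MeasurableSpace Ω) (μ : Measure Ω)
        (T : (Fin n → ℝ) →ₗ[ℝ] (Ω → ℝ)),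
      ∀ x : Fin n → ℝ,
        (∫ ω, |T x ω| ^ q ∂μ) =
          ((∑ i : Fin n, a (i.1 + 1) * dstar x i ^ q) ^ (1 / q)) ^ q) ↔
    (∀ i j, 1 ≤ i → i ≤ n → 1 ≤ j → j ≤ n → a i = a j) := by
  have hq0 : q ≠ 0 := by linarith
  have hanti : ∀ i j, 1 ≤ i → i ≤ j → j ≤ n → a j ≤ a i := by
    intro i j hi hij
    induction j, hij using Nat.le_induction with
    | base => intro _; exact le_rfl
    | succ k hk ih => intro hkn; exact (hmono k (by omega) hkn).trans (ih (by omega))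
  set b : Fin n → ℝ := fun i => a (i.1 + 1) with hbdef
  have hb : Antitone b := fun i j hij => hanti _ _ (by omega) (by
    have : i.1 ≤ j.1 := hij
    omega) (by omega)
  have hb0 : ∀ i, 0 ≤ b i := fun i => hnonneg _ (by omega) (by omega)
  have hN0 : ∀ x : Fin n → ℝ, 0 ≤ ∑ i : Fin n, a (i.1 + 1) * dstar x i ^ q := fun x =>
    Finset.sum_nonneg fun i _ => mul_nonneg (hb0 i) (Real.rpow_nonneg (abs_nonneg _) _)
  have hpow : ∀ x : Fin n → ℝ, ((∑ i : Fin n, a (i.1 + 1) * dstar x i ^ q) ^ (1 / q)) ^ q =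
      ∑ i : Fin n, b i * dstar x i ^ q := fun x => by
    rw [one_div, Real.rpow_inv_rpow (hN0 x) hq0]
  simp only [hpow]
  constructor
  · rintro ⟨Ω, _, μ, T, hT⟩
    let z : Fin n := ⟨0, by omega⟩
    let l : Fin n := ⟨n - 1, by omega⟩
    have hzl : z ≠ l := by
      simp only [z, l, ne_eq, Fin.mk.injEq]
      omega
    have hbz : b z = a 1 := rfl
    have hbl : b l = a n := by
      simp only [hbdef, l]
      congr 1
      omega
    have hbz0 : 0 < b z := by
      obtain ⟨i, hi, hin, hne⟩ := hnz
      rw [hbz]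
      exact (lt_of_le_of_ne (hnonneg i hi hin) hne.symm).trans_le (hanti 1 i le_rfl hi hin)
    -- A nonzero Bochner integral certifies integrability.
    have hint : ∀ x, Integrable (fun ω => |T x ω| ^ q) μ := by
      intro x
      by_cases hx : x = 0
      · subst hx
        simp [Real.zero_rpow hq0]
      · obtain ⟨j, hj⟩ := Function.ne_iff.1 hx
        refine not_imp_comm.1 integral_undef ?_
        rw [hT]
        refine (lt_of_lt_of_le ?_ (sum_le_lorentz hq hb x (Equiv.swap z j))).ne'
        refine Finset.sum_pos' (fun i _ => mul_nonneg (hb0 i) (Real.rpow_nonneg (abs_nonneg _) _))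
          ⟨z, Finset.mem_univ _, ?_⟩
        rw [Equiv.swap_apply_left]
        exact mul_pos hbz0 (Real.rpow_pos_of_pos (abs_pos.2 hj) _)
    let o : Fin n → ℝ := fun _ => 1
    let e : Fin n → ℝ := Pi.single z 1 - Pi.single l 1
    have he : ∀ i, -1 ≤ e i ∧ e i ≤ 1 := by
      intro i
      simp only [e, Pi.sub_apply, Pi.single_apply]
      split_ifs <;> norm_num
    have heswap : ∀ i, e (Equiv.swap z l i) = -e i := by
      intro i
      simp only [e, Pi.sub_apply, Pi.single_apply]
      rcases eq_or_ne i z with rfl | hiz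
      · simp [hzl, hzl.symm]
      · rcases eq_or_ne i l with rfl | hil
        · simp [hzl, hzl.symm]
        · rw [Equiv.swap_apply_of_ne_of_ne hiz hil]
          simp [hiz, hil]
    have hsum : ∑ i, b i * e i = b z - b l := by
      simp [e, mul_sub, Finset.sum_sub_distrib, Pi.single_apply]
    have hTadd : ∀ h ω, T (o + h • e) ω = T o ω + h * T e ω := fun h ω => by simp
    have hTsub : ∀ h ω, T (o - h • e) ω = T o ω - h * T e ω := fun h ω => by simp
    have lim := tendsto_secondDiff_integral (μ := μ) hq (T o) (T e) fun h => by
      simpa only [hTadd] using hint (o + h • e)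
    have low : ∀ᶠ h in nhdsWithin (0 : ℝ) (Set.Ioi 0),
        2 * q * (b z - b l) ≤ ∫ ω, secondDiff q (T o ω) (T e ω) h ∂μ := by
      filter_upwards [Ioc_mem_nhdsGT (zero_lt_one' ℝ)] with h hh
      have hd : ∀ i, -1 ≤ h * e i := fun i => by nlinarith [he i, hh.1, hh.2]
      have i1 := hint (o + h • e)
      have i2 := hint (o - h • e)
      have v1 := hT (o + h • e)
      have v2 := hT (o - h • e)
      have v3 := hT o
      have l1 := lorentz_lower hq hb hb0 (o + h • e) (fun i => h * e i) (Equiv.refl _) hd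
        (fun i => by simp [o])
      have l2 := lorentz_lower hq hb hb0 (o - h • e) (fun i => h * e i) (Equiv.swap z l) hd
        (fun i => by simp [o, heswap])
      have hs : ∑ i, b i * (h * e i) = h * (b z - b l) := by
        rw [← hsum, Finset.mul_sum]
        exact Finset.sum_congr rfl fun i _ => by ring
      rw [hs, ← v1] at l1
      rw [hs, ← v2] at l2
      simp only [o, dstar_one, Real.one_rpow, mul_one] at v3
      simp only [hTadd] at i1 l1
      simp only [hTsub] at i2 l2
      simp only [secondDiff]
      have i3 : Integrable (fun ω => |T o ω + h * T e ω| ^ q + |T o ω - h * T e ω| ^ q) μ :=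
        i1.add i2
      rw [integral_const_mul, integral_sub i3 ((hint o).const_mul 2),
        integral_add i1 i2, integral_const_mul, le_inv_mul_iff₀ hh.1]
      change ∫ ω, |T o ω| ^ q ∂μ = _ at v3
      rw [v3]
      linarith
    have hle : 2 * q * (b z - b l) ≤ 0 := ge_of_tendsto lim low
    have h1n : a 1 ≤ a n := by
      rw [← hbz, ← hbl]
      nlinarith
    have hall : ∀ i, 1 ≤ i → i ≤ n → a i = a 1 := fun i hi hin =>
      le_antisymm (hanti 1 i le_rfl hi hin) (h1n.trans (hanti i n hi hin le_rfl))
    intro i j hi hin hj hjn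
    rw [hall i hi hin, hall j hj hjn]
  · intro h
    have hbc : ∀ i, b i = a 1 := fun i =>
      h _ _ (by omega) (by omega) le_rfl (by omega)
    refine ⟨Fin n, inferInstance, ENNReal.ofReal (a 1) • Measure.count, LinearMap.id, fun x => ?_⟩
    rw [integral_smul_measure, integral_count,
      ENNReal.toReal_ofReal (hnonneg 1 le_rfl (by omega))]
    simp only [hbc, ← Finset.mul_sum, smul_eq_mul, LinearMap.id_apply, dstar]
    rw [Equiv.sum_comp (Tuple.sort fun j => -|x j|) (fun i => |x i| ^ q)]
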